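/- Let (φ,φ̄) ∈ G(T,R) and let W' ⊆ V be E-commensurable of index k with W. Then φ·W' := φ((W'^⊥)^⊥) ∩ V is E-commensurable of index k + d(φ) with W. -/

import Mathlib

open Module Submodule

noncomputable section

abbrev TT : Type := (ℕ → ℂ) × (ℕ →₀ ℂ)
abbrev RR : Type := (ℕ →₀ ℂ) × (ℕ → ℂ)

lemma lc_v_add (v w : ℕ → ℂ) (l : ℕ →₀ ℂ) :
    Finsupp.linearCombination ℂ (v + w) l
      = Finsupp.linearCombination ℂ v l + Finsupp.linearCombination ℂ w l := by
  classical
  simp only [Finsupp.linearCombination_apply]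
  rw [← Finsupp.sum_add]
  exact Finsupp.sum_congr fun i _ => by simp [Pi.add_apply, smul_add, mul_add]

lemma lc_v_smul (c : ℂ) (v : ℕ → ℂ) (l : ℕ →₀ ℂ) :
    Finsupp.linearCombination ℂ (c • v) l = c • Finsupp.linearCombination ℂ v l := by
  classical
  simp only [Finsupp.linearCombination_apply, Finsupp.smul_sum]
  exact Finsupp.sum_congr fun i _ => by simp [Pi.smul_apply, smul_comm, smul_eq_mul, mul_left_comm]

/-- The nondegenerate pairing `p : T × R → ℂ`,
`p((ω,u),(w,ν)) = Σ_i ω(i)w(i) + Σ_i u(i)ν(i)`. -/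
def pairB : TT →ₗ[ℂ] RR →ₗ[ℂ] ℂ :=
  LinearMap.mk₂ ℂ
    (fun x y => Finsupp.linearCombination ℂ x.1 y.1 + Finsupp.linearCombination ℂ y.2 x.2)
    (fun x x' y => by
      simp only [Prod.fst_add, Prod.snd_add, lc_v_add, map_add]; ring)
    (fun c x y => by
      simp only [Prod.smul_fst, Prod.smul_snd, lc_v_smul, map_smul, smul_add])
    (fun x y y' => by
      simp only [Prod.fst_add, Prod.snd_add, lc_v_add, map_add]; ring)
    (fun c x y => by
      simp only [Prod.smul_fst, Prod.smul_snd, lc_v_smul, map_smul, smul_add])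

/-- The Mackey-group condition on a pair of automorphisms:
`p(φ x, y) = p(x, φ̄ y)` for all `x ∈ T`, `y ∈ R`. -/
def IsMackey (φ : TT ≃ₗ[ℂ] TT) (ψ : RR ≃ₗ[ℂ] RR) : Prop :=
  ∀ (x : TT) (y : RR), pairB (φ x) y = pairB x (ψ y)

/-- `W^♯ = (ℕ→ℂ) × {0} ⊆ T`. -/
def Wsharp : Submodule ℂ TT := LinearMap.range (LinearMap.inl ℂ (ℕ → ℂ) (ℕ →₀ ℂ))

/-- `U^♯ = {0} × (ℕ→ℂ) ⊆ R`. -/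
def Usharp : Submodule ℂ RR := LinearMap.range (LinearMap.inr ℂ (ℕ →₀ ℂ) (ℕ → ℂ))

/-- `V = (ℕ→₀ℂ) × (ℕ→₀ℂ) ⊆ T`. -/
def Vsub : Submodule ℂ TT :=
  LinearMap.range
    ((Finsupp.lcoeFun : (ℕ →₀ ℂ) →ₗ[ℂ] (ℕ → ℂ)).prodMap
      (LinearMap.id : (ℕ →₀ ℂ) →ₗ[ℂ] (ℕ →₀ ℂ)))

/-- `W = (ℕ→₀ℂ) × {0} ⊆ T`. -/
def Wsub : Submodule ℂ TT :=
  LinearMap.range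
    ((LinearMap.inl ℂ (ℕ → ℂ) (ℕ →₀ ℂ)).comp
      (Finsupp.lcoeFun : (ℕ →₀ ℂ) →ₗ[ℂ] (ℕ → ℂ)))

/-- `π_U : T → (ℕ→₀ℂ)`, the second projection. -/
def piU : TT →ₗ[ℂ] (ℕ →₀ ℂ) := LinearMap.snd ℂ (ℕ → ℂ) (ℕ →₀ ℂ)

/-- `π_{W*} : R → (ℕ→₀ℂ)`, the first projection. -/
def piW : RR →ₗ[ℂ] (ℕ →₀ ℂ) := LinearMap.fst ℂ (ℕ →₀ ℂ) (ℕ → ℂ)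

/-- The degree `d(φ) = dim π_U(φ(W^♯)) − dim π_U(φ^{-1}(W^♯))`. -/
def deg (φ : TT ≃ₗ[ℂ] TT) : ℤ :=
  (Module.finrank ℂ ((Wsharp.map φ.toLinearMap).map piU) : ℤ) -
    (Module.finrank ℂ ((Wsharp.map φ.symm.toLinearMap).map piU) : ℤ)

/-- `span {(δ_i, 0) : i ≥ n} ⊆ T`. -/
def tailSpan (n : ℕ) : Submodule ℂ TT :=
  Submodule.span ℂ
    ((fun i => ((((Finsupp.single i (1 : ℂ)) : ℕ →₀ ℂ) : ℕ → ℂ), (0 : ℕ →₀ ℂ))) '' {i | n ≤ i})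

/-- `W'` is E-commensurable of index `k` with `W`:
`W' = G ⊕ span{(δ_i,0) : i ≥ n}` with `G ⊆ V` finite-dimensional of dimension `n + k`. -/
def Ecomm (W' : Submodule ℂ TT) (k : ℤ) : Prop :=
  ∃ (n : ℕ) (G : Submodule ℂ TT), G ≤ Vsub ∧ FiniteDimensional ℂ G ∧
    (Module.finrank ℂ G : ℤ) = (n : ℤ) + k ∧ Disjoint G (tailSpan n) ∧
    W' = G ⊔ tailSpan n

/-- `W'^⊥ = {y ∈ R : p(x,y) = 0 for all x ∈ W'}`. -/
def perpR (W' : Submodule ℂ TT) : Submodule ℂ RR :=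
  ⨅ x ∈ (W' : Set TT), LinearMap.ker (pairB x)

/-- `Y^⊥ = {x ∈ T : p(x,y) = 0 for all y ∈ Y}`. -/
def perpT (Y : Submodule ℂ RR) : Submodule ℂ TT :=
  ⨅ y ∈ (Y : Set RR), LinearMap.ker (pairB.flip y)

/-- The action `φ·W' = φ((W'^⊥)^⊥) ∩ V`. -/
def actOn (φ : TT ≃ₗ[ℂ] TT) (W' : Submodule ℂ TT) : Submodule ℂ TT :=
  ((perpT (perpR W')).map φ.toLinearMap) ⊓ Vsub

end


/-- Truncation of the first component to the indices below `n`; its kernel is the closure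
`{(ω, 0) : ω i = 0 for i < n}` of `tailSpan n`. -/
def trunc (n : ℕ) : TT →ₗ[ℂ] TT where
  toFun x := (fun i => if i < n then x.1 i else 0, x.2)
  map_add' x y := by ext i <;> simp; split_ifs <;> simp
  map_smul' c x := by ext i <;> simp

lemma trunc_apply (n : ℕ) (x : TT) :
    trunc n x = (fun i => if i < n then x.1 i else 0, x.2) := rfl

lemma trunc_trunc (n : ℕ) (x : TT) : trunc n (trunc n x) = trunc n x := by
  simp only [trunc_apply, Prod.mk.injEq, and_true]
  ext i
  split_ifs <;> rfl

lemma sub_trunc_mem_ker (n : ℕ) (x : TT) : x - trunc n x ∈ LinearMap.ker (trunc n) := by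
  rw [LinearMap.mem_ker, map_sub, trunc_trunc, sub_self]

lemma mem_ker_trunc {n : ℕ} {x : TT} :
    x ∈ LinearMap.ker (trunc n) ↔ (∀ i < n, x.1 i = 0) ∧ x.2 = 0 := by
  rw [LinearMap.mem_ker, trunc_apply, Prod.ext_iff, funext_iff]
  simp

lemma piU_comp_trunc (n : ℕ) : piU ∘ₗ trunc n = piU := rfl

lemma ker_piU : LinearMap.ker piU = Wsharp := by
  ext x
  simp [piU, Wsharp, Prod.ext_iff, eq_comm]

lemma mem_Wsharp {x : TT} : x ∈ Wsharp ↔ x.2 = 0 := by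
  rw [← ker_piU]; rfl

lemma mem_Vsub {x : TT} : x ∈ Vsub ↔ ∃ w : ℕ →₀ ℂ, (w : ℕ → ℂ) = x.1 := by
  simp only [Vsub, LinearMap.mem_range, Prod.exists, LinearMap.prodMap_apply,
    LinearMap.id_apply, Prod.ext_iff]
  exact ⟨fun ⟨w, _, hw, _⟩ => ⟨w, hw⟩, fun ⟨w, hw⟩ => ⟨w, x.2, hw, rfl⟩⟩

lemma trunc_mem_Vsub (n : ℕ) (x : TT) : trunc n x ∈ Vsub := by
  rw [mem_Vsub]
  refine ⟨Finsupp.onFinset (Finset.range n) (trunc n x).1 fun i hi => ?_, rfl⟩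
  by_contra hin
  exact hi (if_neg (by simpa using hin))

lemma tailSpan_eq (n : ℕ) : tailSpan n = LinearMap.ker (trunc n) ⊓ Vsub := by
  apply le_antisymm
  · rw [tailSpan, span_le]
    rintro _ ⟨i, hi, rfl⟩
    refine ⟨mem_ker_trunc.2 ⟨fun j hj => ?_, rfl⟩, mem_Vsub.2 ⟨_, rfl⟩⟩
    exact Finsupp.single_eq_of_ne (hj.trans_le hi).ne
  · rintro x ⟨hx, hV⟩
    obtain ⟨h1, h2⟩ := mem_ker_trunc.1 hx
    obtain ⟨w, hw⟩ := mem_Vsub.1 hV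
    have hx' : x = (LinearMap.inl ℂ (ℕ → ℂ) (ℕ →₀ ℂ) ∘ₗ Finsupp.lcoeFun) w :=
      Prod.ext hw.symm h2
    rw [hx', ← Finsupp.sum_single w, Finsupp.sum, map_sum]
    refine sum_mem fun i hi => ?_
    have hin : n ≤ i := by
      by_contra hlt
      exact Finsupp.mem_support_iff.1 hi (by rw [hw]; exact h1 i (not_le.1 hlt))
    rw [← mul_one (w i), ← smul_eq_mul, ← Finsupp.smul_single, map_smul]
    exact smul_mem _ _ (subset_span ⟨i, hin, rfl⟩)

lemma pairB_apply (x : TT) (y : RR) :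
    pairB x y = Finsupp.linearCombination ℂ x.1 y.1 + Finsupp.linearCombination ℂ y.2 x.2 := rfl

lemma mem_perpR {W' : Submodule ℂ TT} {y : RR} : y ∈ perpR W' ↔ ∀ x ∈ W', pairB x y = 0 := by
  simp [perpR]

lemma mem_perpT {Y : Submodule ℂ RR} {x : TT} : x ∈ perpT Y ↔ ∀ y ∈ Y, pairB x y = 0 := by
  simp [perpT]

lemma linearCombination_eq_zero {v : ℕ → ℂ} {l : ℕ →₀ ℂ} (h : ∀ i, v i = 0 ∨ l i = 0) :
    Finsupp.linearCombination ℂ v l = 0 := by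
  rw [Finsupp.linearCombination_apply]
  refine Finset.sum_eq_zero fun i _ => ?_
  rcases h i with h | h <;> simp [h]

/-- Every functional factoring through `trunc n` is represented by an element of `R`. -/
lemma exists_pairB_eq_trunc (n : ℕ) (f : TT →ₗ[ℂ] ℂ) :
    ∃ y : RR, ∀ x, pairB x y = f (trunc n x) := by
  classical
  refine ⟨(∑ i ∈ Finset.range n, Finsupp.single i (f (Pi.single i 1, 0)),
    fun i => f (0, Finsupp.single i 1)), fun x => ?_⟩
  have h1 : ((trunc n x).1, (0 : ℕ →₀ ℂ)) =
      ∑ i ∈ Finset.range n, x.1 i • ((Pi.single i 1, 0) : TT) := by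
    refine Prod.ext ?_ ?_
    · ext j
      simp [trunc_apply, Prod.fst_sum, Finset.sum_apply, Pi.single_apply]
    · simp [Prod.snd_sum]
  have h2 : ((0 : ℕ → ℂ), x.2) = ∑ i ∈ x.2.support, x.2 i • ((0, Finsupp.single i 1) : TT) := by
    refine Prod.ext ?_ ?_
    · simp [Prod.fst_sum]
    · rw [Prod.snd_sum]
      simpa [-Finsupp.sum_single, Finsupp.sum] using (Finsupp.sum_single x.2).symm
  have h3 : trunc n x = ((trunc n x).1, (0 : ℕ →₀ ℂ)) + ((0 : ℕ → ℂ), x.2) := by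
    simp [trunc_apply]
  rw [h3, map_add, h1, h2, map_sum, map_sum, pairB_apply]
  congr 1
  · rw [map_sum]
    refine Finset.sum_congr rfl fun i _ => ?_
    rw [Finsupp.linearCombination_single, map_smul, smul_eq_mul, smul_eq_mul, mul_comm]
  · rw [Finsupp.linearCombination_apply]
    exact Finset.sum_congr rfl fun i _ => (map_smul f _ _).symm

lemma perpT_perpR_eq {n : ℕ} {W' : Submodule ℂ TT} (hW' : tailSpan n ≤ W') :
    perpT (perpR W') = (W'.map (trunc n)).comap (trunc n) := by
  apply le_antisymm
  · intro x hx
    by_contra hnot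
    obtain ⟨f, hfx, hf⟩ := exists_le_ker_of_notMem (mt mem_comap.2 hnot)
    obtain ⟨y, hy⟩ := exists_pairB_eq_trunc n f
    refine hfx ((hy x).symm.trans (mem_perpT.1 hx y (mem_perpR.2 fun w hw => ?_)))
    rw [hy]
    exact hf (mem_map_of_mem hw)
  · rintro x ⟨w, hw, hwx⟩
    refine mem_perpT.2 fun y hy => ?_
    have hy0 : ∀ i, n ≤ i → y.1 i = 0 := fun i hi => by
      have := mem_perpR.1 hy _ (hW' (subset_span ⟨i, hi, rfl⟩))
      simpa [pairB_apply, Finsupp.linearCombination_apply, Finsupp.sum, Finsupp.single_apply]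
        using this
    have hz : pairB (x - w) y = 0 := by
      have hk : x - w ∈ LinearMap.ker (trunc n) := by
        rw [LinearMap.mem_ker, map_sub, hwx, sub_self]
      obtain ⟨h1, h2⟩ := mem_ker_trunc.1 hk
      rw [pairB_apply, h2, map_zero, add_zero]
      exact linearCombination_eq_zero fun i => (lt_or_ge i n).imp (h1 i) (hy0 i)
    rw [map_sub, LinearMap.sub_apply, mem_perpR.1 hy w hw, sub_zero] at hz
    exact hz

/-- If every sequence `ω` pairs to zero with all but finitely many of the `b j`, then the `b j`
have uniformly bounded support. -/
lemma exists_bound_of_finite_pairing (b : ℕ → ℕ →₀ ℂ)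
    (hb : ∀ ω : ℕ → ℂ, {j | Finsupp.linearCombination ℂ ω (b j) ≠ 0}.Finite) :
    ∃ N, ∀ j i, N ≤ i → b j i = 0 := by
  obtain ⟨κ, a, ha, hspan, hli⟩ := exists_linearIndependent' ℂ b
  have hκ : Finite κ := by
    obtain ⟨g, hg⟩ := LinearMap.exists_extend
      ((Finsupp.linearCombination ℂ fun _ : κ => (1 : ℂ)) ∘ₗ hli.repr)
    have h1 : ∀ k, g (b (a k)) = 1 := fun k => by
      have := LinearMap.congr_fun hg ⟨b (a k), subset_span ⟨k, rfl⟩⟩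
      simpa [hli.repr_eq_single k ⟨b (a k), subset_span ⟨k, rfl⟩⟩ rfl] using this
    have h2 : Finsupp.linearCombination ℂ (fun i => g (Finsupp.single i 1)) = g := by
      ext i
      simp
    have hfin := hb fun i => g (Finsupp.single i 1)
    rw [h2] at hfin
    have := hfin.to_subtype
    exact Finite.of_injective (fun k => (⟨a k, by simp [h1]⟩ : {j | g (b j) ≠ 0}))
      fun k l hkl => ha (congrArg Subtype.val hkl)
  cases nonempty_fintype κ
  obtain ⟨N, hN⟩ := (Finset.univ.biUnion fun k => (b (a k)).support).exists_nat_subset_range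
  have hle : span ℂ (Set.range b) ≤ Finsupp.supported ℂ ℂ {i | i < N} := by
    rw [← hspan, span_le]
    rintro _ ⟨k, rfl⟩
    intro i hi
    exact Finset.mem_range.1 (hN (Finset.mem_biUnion.2 ⟨k, Finset.mem_univ _, hi⟩))
  refine ⟨N, fun j i hi => ?_⟩
  by_contra hne
  exact hi.not_gt (hle (subset_span ⟨j, rfl⟩) (Finsupp.mem_support_iff.2 hne))

lemma IsMackey.symm {φ : TT ≃ₗ[ℂ] TT} {ψ : RR ≃ₗ[ℂ] RR} (h : IsMackey φ ψ) :
    IsMackey φ.symm ψ.symm := fun x y => by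
  simpa using (h (φ.symm x) (ψ.symm y)).symm

/-- Continuity of Mackey automorphisms with respect to the subspaces `ker (trunc n)`. -/
lemma IsMackey.exists_ker_trunc_le {φ : TT ≃ₗ[ℂ] TT} {ψ : RR ≃ₗ[ℂ] RR} (h : IsMackey φ ψ)
    (n : ℕ) : ∃ N, LinearMap.ker (trunc N) ≤ (LinearMap.ker (trunc n)).comap φ.toLinearMap := by
  have hpair (x : TT) (hx : x.2 = 0) (y : RR) :
      pairB (φ x) y = Finsupp.linearCombination ℂ x.1 (ψ y).1 := by
    rw [h, pairB_apply, hx, map_zero, add_zero]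
  have hfst (x : TT) (hx : x.2 = 0) (i : ℕ) : (φ x).1 i =
      Finsupp.linearCombination ℂ x.1 (ψ (Finsupp.single i 1, 0)).1 := by
    rw [← hpair x hx, pairB_apply]
    simp
  have hsnd (x : TT) (hx : x.2 = 0) (i : ℕ) : (φ x).2 i =
      Finsupp.linearCombination ℂ x.1 (ψ (0, Pi.single i 1)).1 := by
    rw [← hpair x hx, pairB_apply]
    simp [Finsupp.linearCombination_apply, Finsupp.sum, Pi.single_apply]
  obtain ⟨N₁, hN₁⟩ := exists_bound_of_finite_pairing
    (fun j => (ψ (0, Pi.single j 1)).1) fun ω => by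
      simp only [← hsnd (ω, 0) rfl]
      exact (φ (ω, 0)).2.hasFiniteSupport
  obtain ⟨N₂, hN₂⟩ := ((Finset.range n).biUnion
    fun i => (ψ (Finsupp.single i 1, 0)).1.support).exists_nat_subset_range
  refine ⟨max N₁ N₂, fun x hx => ?_⟩
  obtain ⟨h1, h2⟩ := mem_ker_trunc.1 hx
  refine mem_ker_trunc.2 ⟨fun i hi => ?_, ?_⟩
  · refine (hfst x h2 i).trans (linearCombination_eq_zero fun j => ?_)
    refine (lt_or_ge j (max N₁ N₂)).imp (h1 j) fun hj => ?_
    by_contra hne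
    exact ((le_max_right _ _).trans hj).not_gt (Finset.mem_range.1
      (hN₂ (Finset.mem_biUnion.2 ⟨i, Finset.mem_range.2 hi, Finsupp.mem_support_iff.2 hne⟩)))
  · ext i
    refine (hsnd x h2 i).trans (linearCombination_eq_zero fun j => ?_)
    exact (lt_or_ge j (max N₁ N₂)).imp (h1 j) fun hj => hN₁ i j ((le_max_left _ _).trans hj)

lemma map_trunc_Wsharp (n : ℕ) :
    Wsharp.map (trunc n) = LinearMap.range (LinearMap.inl ℂ (ℕ → ℂ) (ℕ →₀ ℂ) ∘ₗ
      Function.ExtendByZero.linearMap ℂ (Fin.val : Fin n → ℕ)) := by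
  have hext (c : Fin n → ℂ) (i : ℕ) :
      Function.extend Fin.val c 0 i = if hi : i < n then c ⟨i, hi⟩ else 0 := by
    split_ifs with hi
    · exact Fin.val_injective.extend_apply c 0 ⟨i, hi⟩
    · exact Function.extend_apply' _ _ _ fun ⟨j, hj⟩ => hi (hj ▸ j.2)
  apply le_antisymm
  · rintro _ ⟨x, hx, rfl⟩
    refine ⟨fun j => x.1 j, Prod.ext ?_ (mem_Wsharp.1 hx).symm⟩
    ext i
    exact (hext (fun j => x.1 j) i).trans (by rw [trunc_apply]; dsimp only; split_ifs <;> rfl)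
  · rintro _ ⟨c, rfl⟩
    refine ⟨(Function.extend Fin.val c 0, 0), mem_Wsharp.2 rfl, Prod.ext ?_ rfl⟩
    ext i
    change (if i < n then Function.extend Fin.val c 0 i else 0) = Function.extend Fin.val c 0 i
    rw [hext]
    split_ifs <;> rfl

instance (n : ℕ) : FiniteDimensional ℂ (Wsharp.map (trunc n)) := by
  rw [map_trunc_Wsharp]
  infer_instance

lemma finrank_map_trunc_Wsharp (n : ℕ) : finrank ℂ (Wsharp.map (trunc n)) = n := by
  rw [map_trunc_Wsharp, LinearMap.finrank_range_of_inj, finrank_fin_fun]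
  refine LinearMap.inl_injective.comp fun c d hcd => ?_
  ext j
  have := congrFun hcd j
  simpa [Fin.val_injective.extend_apply] using this

lemma finiteDimensional_map_comp {M N P : Type*} [AddCommGroup M] [AddCommGroup N]
    [AddCommGroup P] [Module ℂ M] [Module ℂ N] [Module ℂ P] (f : M →ₗ[ℂ] N) (g : N →ₗ[ℂ] P)
    (A : Submodule ℂ M) [FiniteDimensional ℂ (A.map f)] :
    FiniteDimensional ℂ (A.map (g ∘ₗ f)) := by
  rw [map_comp]
  infer_instance

lemma finrank_map_eq_add {M N P : Type*} [AddCommGroup M] [AddCommGroup N]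
    [AddCommGroup P] [Module ℂ M] [Module ℂ N] [Module ℂ P] (f : M →ₗ[ℂ] N) (g : N →ₗ[ℂ] P)
    (A : Submodule ℂ M) [FiniteDimensional ℂ (A.map f)] :
    finrank ℂ (A.map f) =
      finrank ℂ (A.map (g ∘ₗ f)) + finrank ℂ ((A ⊓ LinearMap.ker (g ∘ₗ f)).map f) := by
  rw [← (g.domRestrict (A.map f)).finrank_range_add_finrank_ker, LinearMap.range_domRestrict,
    ← map_comp, LinearMap.ker_domRestrict,
    LinearMap.ker_comp, ← map_inf_eq_map_inf_comap]
  congr 1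
  rw [← finrank_map_subtype_eq, map_comap_subtype]

lemma finiteDimensional_map_trunc {A : Submodule ℂ TT} (hA : FiniteDimensional ℂ (A.map piU))
    (n : ℕ) : FiniteDimensional ℂ (A.map (trunc n)) := by
  refine Submodule.finiteDimensional_of_le (S₂ := Wsharp.map (trunc n) ⊔
    (A.map piU).map (LinearMap.inr ℂ (ℕ → ℂ) (ℕ →₀ ℂ))) ?_
  rintro _ ⟨x, hx, rfl⟩
  refine mem_sup.2 ⟨trunc n (x.1, 0), mem_map_of_mem (mem_Wsharp.2 rfl), (0, x.2),
    mem_map_of_mem (mem_map_of_mem hx), ?_⟩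
  simp [trunc_apply]

lemma IsMackey.finiteDimensional_map_piU {φ : TT ≃ₗ[ℂ] TT} {ψ : RR ≃ₗ[ℂ] RR}
    (h : IsMackey φ ψ) {A : Submodule ℂ TT} (hA : FiniteDimensional ℂ (A.map piU)) :
    FiniteDimensional ℂ ((A.map φ.toLinearMap).map piU) := by
  obtain ⟨N, hN⟩ := h.exists_ker_trunc_le 0
  have := finiteDimensional_map_trunc hA N
  refine Submodule.finiteDimensional_of_le
    (S₂ := (A.map (trunc N)).map (piU ∘ₗ φ.toLinearMap)) ?_
  rintro _ ⟨_, ⟨x, hx, rfl⟩, rfl⟩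
  refine ⟨trunc N x, mem_map_of_mem hx, ?_⟩
  have := (mem_ker_trunc.1 (hN (sub_trunc_mem_ker N x))).2
  rw [LinearEquiv.coe_coe, map_sub, Prod.snd_sub, sub_eq_zero] at this
  exact this.symm

lemma comp_trunc_of_ker_le {P : Type*} [AddCommGroup P] [Module ℂ P] {n : ℕ} {g : TT →ₗ[ℂ] P}
    (hg : LinearMap.ker (trunc n) ≤ LinearMap.ker g) : g ∘ₗ trunc n = g := by
  refine LinearMap.ext fun x => ?_
  have := hg (sub_trunc_mem_ker n x)
  rw [LinearMap.mem_ker, map_sub, sub_eq_zero] at this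
  exact this.symm

lemma ker_comp_symm {P : Type*} [AddCommGroup P] [Module ℂ P] (g : TT →ₗ[ℂ] P)
    (φ : TT ≃ₗ[ℂ] TT) :
    LinearMap.ker (g ∘ₗ φ.symm.toLinearMap) = (LinearMap.ker g).map φ.toLinearMap := by
  rw [LinearMap.ker_comp, Submodule.map_equiv_eq_comap_symm]

lemma map_comp_symm {P : Type*} [AddCommGroup P] [Module ℂ P] (g : TT →ₗ[ℂ] P)
    (φ : TT ≃ₗ[ℂ] TT) (A : Submodule ℂ TT) :
    (A.map φ.toLinearMap).map (g ∘ₗ φ.symm.toLinearMap) = A.map g := by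
  rw [← map_comp]
  congr 1
  refine LinearMap.ext fun x => ?_
  simp

/-- Truncating `φ A` raises the dimension by a constant independent of `A`, as long as `A`
contains `ker (trunc n)`. -/
lemma finrank_map_trunc_map {φ : TT ≃ₗ[ℂ] TT} {n m : ℕ}
    (hm : LinearMap.ker (trunc m) ≤ (LinearMap.ker (trunc n)).comap φ.symm.toLinearMap)
    {A : Submodule ℂ TT} (hA : LinearMap.ker (trunc n) ≤ A)
    [FiniteDimensional ℂ ((A.map φ.toLinearMap).map (trunc m))] :
    finrank ℂ ((A.map φ.toLinearMap).map (trunc m)) = finrank ℂ (A.map (trunc n)) +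
      finrank ℂ (((LinearMap.ker (trunc n)).map φ.toLinearMap).map (trunc m)) := by
  rw [finrank_map_eq_add (trunc m) (trunc n ∘ₗ φ.symm.toLinearMap) (A.map φ.toLinearMap),
    comp_trunc_of_ker_le (by rwa [LinearMap.ker_comp]), map_comp_symm, ker_comp_symm,
    inf_eq_right.2 (map_mono hA)]

lemma finrank_map_trunc_map_Wsharp {φ : TT ≃ₗ[ℂ] TT} {m : ℕ}
    (hm : LinearMap.ker (trunc m) ≤ Wsharp.comap φ.symm.toLinearMap)
    [FiniteDimensional ℂ ((Wsharp.map φ.toLinearMap).map (trunc m))] :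
    (finrank ℂ ((Wsharp.map φ.toLinearMap).map (trunc m)) : ℤ) = m + deg φ := by
  have h1 := finrank_map_eq_add (trunc m) piU (Wsharp.map φ.toLinearMap)
  have h2 := finrank_map_eq_add (trunc m) (piU ∘ₗ φ.symm.toLinearMap) Wsharp
  rw [piU_comp_trunc, ker_piU, inf_comm] at h1
  rw [comp_trunc_of_ker_le (by rwa [LinearMap.ker_comp, ker_piU]), ker_comp_symm, ker_piU,
    finrank_map_trunc_Wsharp, map_comp] at h2
  rw [deg]
  omega

lemma inf_Vsub_eq {n : ℕ} {M : Submodule ℂ TT} (hM : LinearMap.ker (trunc n) ≤ M) :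
    M ⊓ Vsub = M.map (trunc n) ⊔ tailSpan n := by
  rw [tailSpan_eq]
  apply le_antisymm
  · rintro x ⟨hx, hV⟩
    exact mem_sup.2 ⟨trunc n x, mem_map_of_mem hx, x - trunc n x,
      ⟨sub_trunc_mem_ker n x, sub_mem hV (trunc_mem_Vsub n x)⟩, add_sub_cancel _ _⟩
  · refine sup_le ?_ (inf_le_inf_right _ hM)
    rintro _ ⟨x, hx, rfl⟩
    exact ⟨(sub_mem_iff_right _ hx).1 (hM (sub_trunc_mem_ker n x)), trunc_mem_Vsub n x⟩

lemma disjoint_map_trunc_tailSpan (n : ℕ) (M : Submodule ℂ TT) :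
    Disjoint (M.map (trunc n)) (tailSpan n) := by
  rw [tailSpan_eq, disjoint_def]
  rintro _ ⟨x, -, rfl⟩ ⟨hx, -⟩
  exact (trunc_trunc n x).symm.trans hx

lemma finrank_map_trunc_of_disjoint {n : ℕ} {G : Submodule ℂ TT} (hG : G ≤ Vsub)
    (hdisj : Disjoint G (tailSpan n)) : finrank ℂ (G.map (trunc n)) = finrank ℂ G := by
  have hinj : Function.Injective ((trunc n).domRestrict G) := by
    refine (injective_iff_map_eq_zero _).2 fun x hx => ?_
    exact Subtype.ext (disjoint_def.1 hdisj x x.2 (by rw [tailSpan_eq]; exact ⟨hx, hG x.2⟩))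
  rw [← LinearMap.range_domRestrict, LinearMap.finrank_range_of_inj hinj]

/-- If `W'` is E-commensurable of index `k` with `W`, then `φ·W' = φ((W'^⊥)^⊥) ∩ V` is
E-commensurable of index `k + d(φ)` with `W`. -/
theorem stmt9 (φ : TT ≃ₗ[ℂ] TT) (ψ : RR ≃ₗ[ℂ] RR) (h : IsMackey φ ψ)
    (W' : Submodule ℂ TT) (k : ℤ) (hW' : Ecomm W' k) :
    Ecomm (actOn φ W') (k + deg φ) := by
  obtain ⟨n, G, hGV, hGfin, hGrank, hdisj, rfl⟩ := hW'
  set L := perpT (perpR (G ⊔ tailSpan n)) with hL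
  obtain ⟨m, hm⟩ := h.symm.exists_ker_trunc_le n
  have hkerW : LinearMap.ker (trunc n) ≤ Wsharp := fun x hx =>
    mem_Wsharp.2 (mem_ker_trunc.1 hx).2
  have htail : (tailSpan n).map (trunc n) = ⊥ := by
    rw [tailSpan_eq, ← LinearMap.le_ker_iff_map]
    exact inf_le_left
  rw [perpT_perpR_eq le_sup_right, Submodule.map_sup, htail, sup_bot_eq] at hL
  have hkerL : LinearMap.ker (trunc n) ≤ L := hL ▸ comap_mono bot_le
  have hLmap : L.map (trunc n) = G.map (trunc n) := by
    rw [hL, map_comap_eq, inf_eq_right]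
    exact LinearMap.map_le_range
  have hkerφL : LinearMap.ker (trunc m) ≤ L.map φ.toLinearMap := by
    rw [map_equiv_eq_comap_symm]
    exact hm.trans (comap_mono hkerL)
  have hLU : FiniteDimensional ℂ (L.map piU) := by
    have : FiniteDimensional ℂ (L.map (trunc n)) := hLmap ▸ inferInstance
    exact finiteDimensional_map_comp (trunc n) piU L
  have hWU : FiniteDimensional ℂ (Wsharp.map piU) :=
    finiteDimensional_map_comp (trunc 0) piU Wsharp
  have hLfin := finiteDimensional_map_trunc (h.finiteDimensional_map_piU hLU) m
  have hWfin := finiteDimensional_map_trunc (h.finiteDimensional_map_piU hWU) m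
  refine ⟨m, (L.map φ.toLinearMap).map (trunc m), ?_, hLfin, ?_,
    disjoint_map_trunc_tailSpan m _, inf_Vsub_eq hkerφL⟩
  · rintro _ ⟨x, -, rfl⟩
    exact trunc_mem_Vsub m x
  · have h1 := finrank_map_trunc_map hm hkerL
    have h2 := finrank_map_trunc_map hm hkerW
    have h3 := finrank_map_trunc_map_Wsharp (hm.trans (comap_mono hkerW))
    rw [hLmap, finrank_map_trunc_of_disjoint hGV hdisj] at h1
    rw [finrank_map_trunc_Wsharp] at h2
    omega
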